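/- arXiv:1910.05073 — 3 statements merged into one kernel-verified Lean document; each statement's English description precedes it below -/
import Mathlib

section
/- For any u, v in the unitary group U(H), one has ‖u − v‖ ≤ d(u,v) ≤ (π/2) ‖u − v‖, where ‖·‖ is the operator norm. -/
noncomputable section

abbrev Hsp (N : ℕ) : Type := EuclideanSpace ℂ (Fin N)

abbrev Op (N : ℕ) : Type := Hsp N →L[ℂ] Hsp N

/-- A map `γ : ℝ → E` is piecewise C¹ on `[a,b]` if there is a partition
`a = τ 0 ≤ τ 1 ≤ ⋯ ≤ τ n = b` such that `γ` is C¹ on each subinterval. -/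
def PiecewiseC1On {E : Type*} [NormedAddCommGroup E] [NormedSpace ℝ E]
    (γ : ℝ → E) (a b : ℝ) : Prop :=
  ∃ (n : ℕ) (τ : ℕ → ℝ), τ 0 = a ∧ τ n = b ∧ (∀ i < n, τ i ≤ τ (i + 1)) ∧
    ∀ i < n, ContDiffOn ℝ 1 γ (Set.Icc (τ i) (τ (i + 1)))

/-- The length `L(γ) = ∫_a^b ‖γ'(t)‖ dt` of a curve. -/
def pathLength {E : Type*} [NormedAddCommGroup E] [NormedSpace ℝ E]
    (γ : ℝ → E) (a b : ℝ) : ℝ :=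
  ∫ t in a..b, ‖deriv γ t‖

/-- Geodesic distance on the unitary group of `EuclideanSpace ℂ (Fin N)`, for the
Finsler metric given by the operator norm: the infimum of lengths of piecewise C¹
curves in the unitary group joining `u` to `v`. -/
def geoDist (N : ℕ) (u v : Op N) : ℝ :=
  sInf {l | ∃ (a b : ℝ) (γ : ℝ → Op N), a ≤ b ∧ PiecewiseC1On γ a b ∧
    (∀ t ∈ Set.Icc a b, γ t ∈ unitary (Op N)) ∧ γ a = u ∧ γ b = v ∧
    l = pathLength γ a b}

/-- `(u, φ)` belongs to the realization `Ũ(H) = {(u,φ) : det u = e^{iφ}}` of the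
universal cover of the unitary group. -/
def InUCover (N : ℕ) (u : Op N) (φ : ℝ) : Prop :=
  u ∈ unitary (Op N) ∧
    LinearMap.det (u : Hsp N →ₗ[ℂ] Hsp N) = Complex.exp (φ * Complex.I)

/-- Geodesic distance on the universal cover `Ũ(H)`: the infimum of the lengths
`∫ ‖γ'(t)‖ dt` over piecewise C¹ curves `t ↦ (γ t, f t)` in `Ũ(H)` joining
`(u, φ)` to `(v, ψ)`. -/
def ucoverDist (N : ℕ) (u : Op N) (φ : ℝ) (v : Op N) (ψ : ℝ) : ℝ :=
  sInf {l | ∃ (a b : ℝ) (γ : ℝ → Op N) (f : ℝ → ℝ), a ≤ b ∧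
    PiecewiseC1On (fun t => (γ t, f t)) a b ∧
    (∀ t ∈ Set.Icc a b, InUCover N (γ t) (f t)) ∧
    γ a = u ∧ f a = φ ∧ γ b = v ∧ f b = ψ ∧
    l = pathLength γ a b}

/-- The multiset of eigenvalues (with multiplicity) of an endomorphism, i.e. the
roots of its characteristic polynomial. -/
def eigenvalueMultiset (N : ℕ) (w : Op N) : Multiset ℂ :=
  (LinearMap.charpoly (w : Hsp N →ₗ[ℂ] Hsp N)).roots

/-- `θ ∈ R`: `(e^{iθ_j})_j` is the family of eigenvalues of `w` (with multiplicity)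
and `∑ θ_j = c`. -/
def InRSet (N : ℕ) (w : Op N) (c : ℝ) (θ : Fin N → ℝ) : Prop :=
  Multiset.map (fun j => Complex.exp ((θ j : ℂ) * Complex.I)) Finset.univ.val
      = eigenvalueMultiset N w ∧ ∑ j, θ j = c

/-- `m = min { max_j |θ_j| : θ ∈ R }`. -/
def mval (N : ℕ) (w : Op N) (c : ℝ) : ℝ :=
  sInf {x | ∃ θ : Fin N → ℝ, InRSet N w c θ ∧ x = ⨆ j, |θ j|}

end

/-!
A curve is at least as long as its chord, so every admissible length is at least `‖u - v‖`.
Conversely, whenever `v * star u = exp (i x)` with `x` self-adjoint, the curve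
`t ↦ exp (i t x) * u` joins `u` to `v` at constant speed `‖x‖`. Taking for `x` the principal
argument of `v * star u`, the bound `|θ| ≤ (π / 2) |exp (i θ) - 1|` for `|θ| ≤ π`, applied on the
spectrum, gives `‖x‖ ≤ (π / 2) ‖v * star u - 1‖ = (π / 2) ‖u - v‖`.
The continuous functional calculus provides `x`, since `arg` is continuous on a finite spectrum even
when `-1` belongs to it.
-/

section PathLength

open MeasureTheory Set

variable {E : Type*} [NormedAddCommGroup E] [NormedSpace ℝ E] {γ : ℝ → E} {a b : ℝ}

lemma intervalIntegrable_deriv_of_contDiffOn_Icc (hab : a ≤ b)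
    (hγ : ContDiffOn ℝ 1 γ (Icc a b)) : IntervalIntegrable (deriv γ) volume a b := by
  rcases hab.eq_or_lt with rfl | hlt
  · exact IntervalIntegrable.refl
  have hcont : ContinuousOn (derivWithin γ (Icc a b)) (Icc a b) :=
    hγ.continuousOn_derivWithin (uniqueDiffOn_Icc hlt) le_rfl
  refine (hcont.intervalIntegrable_of_Icc hab).congr_uIoo fun t ht ↦ ?_
  rw [uIoo_of_le hab] at ht
  exact derivWithin_of_mem_nhds (Icc_mem_nhds ht.1 ht.2)

lemma norm_sub_le_pathLength_of_contDiffOn_Icc (hab : a ≤ b) (hγ : ContDiffOn ℝ 1 γ (Icc a b)) :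
    ‖γ b - γ a‖ ≤ pathLength γ a b := by
  have hint : IntegrableOn (deriv γ) (Icc a b) := by
    rw [← intervalIntegrable_iff_integrableOn_Icc_of_le hab]
    exact intervalIntegrable_deriv_of_contDiffOn_Icc hab hγ
  have hlength : pathLength γ a b = ∫ t in Icc a b, ‖deriv γ t‖ := by
    rw [pathLength, intervalIntegral.integral_of_le hab, integral_Icc_eq_integral_Ioc]
  rw [hlength, ← ENNReal.ofReal_le_ofReal_iff (by positivity), ofReal_norm,
    ofReal_integral_norm_eq_lintegral_enorm hint]
  exact enorm_sub_le_lintegral_deriv_of_contDiffOn_Icc hγ hab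

lemma PiecewiseC1On.norm_sub_le_pathLength (hγ : PiecewiseC1On γ a b) :
    ‖γ b - γ a‖ ≤ pathLength γ a b := by
  obtain ⟨n, τ, rfl, rfl, hτ, hC1⟩ := hγ
  calc ‖γ (τ n) - γ (τ 0)‖ = ‖∑ i ∈ Finset.range n, (γ (τ (i + 1)) - γ (τ i))‖ := by
        rw [Finset.sum_range_sub (fun i ↦ γ (τ i))]
    _ ≤ ∑ i ∈ Finset.range n, pathLength γ (τ i) (τ (i + 1)) :=
        norm_sum_le_of_le _ fun i hi ↦
          have hin := Finset.mem_range.1 hi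
          norm_sub_le_pathLength_of_contDiffOn_Icc (hτ i hin) (hC1 i hin)
    _ = pathLength γ (τ 0) (τ n) :=
        intervalIntegral.sum_integral_adjacent_intervals fun i hi ↦
          (intervalIntegrable_deriv_of_contDiffOn_Icc (hτ i hi) (hC1 i hi)).norm

lemma PiecewiseC1On.of_contDiffOn_Icc (hab : a ≤ b) (hγ : ContDiffOn ℝ 1 γ (Icc a b)) :
    PiecewiseC1On γ a b :=
  ⟨1, fun i ↦ if i = 0 then a else b, by simp, by simp, by simpa, by simpa⟩

end PathLength

section Spectrum

lemma finite_spectrum_of_isIntegral {𝕜 A : Type*} [Field 𝕜] [Ring A] [Algebra 𝕜 A] {a : A}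
    (ha : IsIntegral 𝕜 a) : (spectrum 𝕜 a).Finite := by
  nontriviality A
  refine ((minpoly 𝕜 a).rootSet_finite 𝕜).subset fun z hz ↦ ?_
  have heval : (minpoly 𝕜 a).eval z ∈ spectrum 𝕜 (Polynomial.aeval a (minpoly 𝕜 a)) :=
    spectrum.subset_polynomial_aeval a (minpoly 𝕜 a) ⟨z, hz, rfl⟩
  rw [minpoly.aeval, spectrum.zero_eq, Set.mem_singleton_iff] at heval
  exact (Polynomial.mem_rootSet_of_ne (minpoly.ne_zero ha)).2 (by simpa using heval)

lemma norm_sub_le_norm_sub_algebraMap_of_mem_spectrum {𝕜 A : Type*} [NormedField 𝕜] [NormedRing A]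
    [NormedAlgebra 𝕜 A] [CompleteSpace A] [NormOneClass A] {a : A} {z : 𝕜}
    (hz : z ∈ spectrum 𝕜 a) (w : 𝕜) : ‖z - w‖ ≤ ‖a - algebraMap 𝕜 A w‖ := by
  refine spectrum.norm_le_norm_of_mem ?_
  rw [← spectrum.sub_singleton_eq]
  exact Set.sub_mem_sub hz rfl

end Spectrum

section Argument

open Complex selfAdjoint
open scoped Real

lemma exp_I_mul_arg_of_norm_eq_one {z : ℂ} (hz : ‖z‖ = 1) : exp (I * z.arg) = z := by
  simpa [hz, mul_comm] using norm_mul_exp_arg_mul_I z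

lemma abs_le_pi_div_two_mul_norm_exp_I_mul_sub_one {θ : ℝ} (hθ : |θ| ≤ π) :
    |θ| ≤ π / 2 * ‖exp (I * θ) - 1‖ := by
  have hhalf : |θ / 2| = |θ| / 2 := by rw [abs_div, abs_two]
  have hjordan : 2 / π * (|θ| / 2) ≤ |Real.sin (θ / 2)| :=
    hhalf ▸ Real.mul_abs_le_abs_sin (by rw [hhalf]; gcongr)
  calc |θ| = π * (2 / π * (|θ| / 2)) := by field_simp
    _ ≤ π * |Real.sin (θ / 2)| := by gcongr
    _ = π / 2 * ‖exp (I * θ) - 1‖ := by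
        rw [norm_exp_I_mul_ofReal_sub_one, Real.norm_eq_abs, abs_mul, abs_two]
        ring

variable {A : Type*} [CStarAlgebra A]

lemma norm_argSelfAdjoint_le_pi_div_two_mul_norm_sub_one (u : unitary A) :
    ‖Unitary.argSelfAdjoint u‖ ≤ π / 2 * ‖(u : A) - 1‖ := by
  nontriviality A
  refine norm_cfc_le (by positivity) fun z hz ↦ ?_
  have hz1 : ‖z‖ = 1 := spectrum.norm_eq_one_of_unitary u.2 hz
  calc ‖(z.arg : ℂ)‖ = |z.arg| := by rw [norm_real, Real.norm_eq_abs]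
    _ ≤ π / 2 * ‖z - 1‖ := by
        simpa only [exp_I_mul_arg_of_norm_eq_one hz1] using
          abs_le_pi_div_two_mul_norm_exp_I_mul_sub_one (abs_arg_le_pi z)
    _ ≤ π / 2 * ‖(u : A) - 1‖ := by
        gcongr
        simpa using norm_sub_le_norm_sub_algebraMap_of_mem_spectrum hz 1

lemma expUnitary_argSelfAdjoint_of_continuousOn {u : unitary A}
    (hu : ContinuousOn arg (spectrum ℂ (u : A))) :
    expUnitary (Unitary.argSelfAdjoint u) = u := by
  ext
  rw [expUnitary_coe, Unitary.argSelfAdjoint_coe, ← CFC.exp_eq_normedSpace_exp (𝕜 := ℂ),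
    ← cfc_comp_smul .., ← cfc_comp' ..]
  conv_rhs => rw [← cfc_id' ℂ (u : A)]
  refine cfc_congr fun z hz ↦ ?_
  simpa only [smul_eq_mul, ← exp_eq_exp_ℂ] using
    exp_I_mul_arg_of_norm_eq_one (spectrum.norm_eq_one_of_unitary u.2 hz)

end Argument

section GeodesicDistance

open Complex selfAdjoint
open scoped Real

/-- The lengths of the piecewise C¹ curves in the unitary group of `A` joining `u` to `v`. -/
def unitaryCurveLengths {A : Type*} [NormedRing A] [NormedSpace ℝ A] [StarRing A] (u v : A) :
    Set ℝ :=
  {l | ∃ (a b : ℝ) (γ : ℝ → A), a ≤ b ∧ PiecewiseC1On γ a b ∧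
    (∀ t ∈ Set.Icc a b, γ t ∈ unitary A) ∧ γ a = u ∧ γ b = v ∧ l = pathLength γ a b}

/-- The geodesic distance on the unitary group of `A` for the Finsler metric given by the norm,
extending `geoDist` to normed star rings. It takes the junk value `0` when no piecewise C¹ curve of
unitaries joins `u` to `v`. -/
noncomputable def unitaryGeoDist {A : Type*} [NormedRing A] [NormedSpace ℝ A] [StarRing A]
    (u v : A) : ℝ :=
  sInf (unitaryCurveLengths u v)

lemma norm_sub_le_of_mem_unitaryCurveLengths {A : Type*} [NormedRing A] [NormedSpace ℝ A]
    [StarRing A] {u v : A} {l : ℝ} (hl : l ∈ unitaryCurveLengths u v) : ‖u - v‖ ≤ l := by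
  obtain ⟨a, b, γ, -, hγ, -, rfl, rfl, rfl⟩ := hl
  rw [norm_sub_rev]
  exact hγ.norm_sub_le_pathLength

variable {A : Type*} [CStarAlgebra A]

/-- The curve `t ↦ exp (i t x) * u`, a translated one-parameter group of unitaries, which joins `u`
to `expUnitary x * u` at constant speed `‖x‖`. -/
noncomputable def expUnitaryCurve (x : selfAdjoint A) (u : unitary A) (t : ℝ) : A :=
  expUnitary (t • x) * u

lemma hasDerivAt_expUnitaryCurve (x : selfAdjoint A) (u : unitary A) (t : ℝ) :
    HasDerivAt (expUnitaryCurve x u) (expUnitary (t • x) * (I • (x : A)) * u) t := by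
  have hexp : ∀ s : ℝ, (expUnitary (s • x) : A) = NormedSpace.exp (s • (I • (x : A))) :=
    fun s ↦ by rw [expUnitary_coe, val_smul, smul_comm]
  change HasDerivAt (fun s : ℝ ↦ (expUnitary (s • x) : A) * u) _ t
  simpa only [hexp] using (hasDerivAt_exp_smul_const (I • (x : A)) t).mul_const (u : A)

lemma contDiff_one_expUnitaryCurve (x : selfAdjoint A) (u : unitary A) :
    ContDiff ℝ 1 (expUnitaryCurve x u) := by
  have hcont : Continuous fun t : ℝ ↦ (expUnitary (t • x) : A) :=
    continuous_subtype_val.comp (by fun_prop)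
  rw [contDiff_one_iff_deriv, funext fun t ↦ (hasDerivAt_expUnitaryCurve x u t).deriv]
  exact ⟨fun t ↦ (hasDerivAt_expUnitaryCurve x u t).differentiableAt, by fun_prop⟩

lemma norm_deriv_expUnitaryCurve (x : selfAdjoint A) (u : unitary A) (t : ℝ) :
    ‖deriv (expUnitaryCurve x u) t‖ = ‖x‖ := by
  rw [(hasDerivAt_expUnitaryCurve x u t).deriv, CStarRing.norm_mul_coe_unitary,
    CStarRing.norm_coe_unitary_mul, norm_smul, norm_I, one_mul]
  rfl

lemma norm_mem_unitaryCurveLengths_expUnitary_mul (x : selfAdjoint A) (u : unitary A) :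
    ‖x‖ ∈ unitaryCurveLengths (u : A) (expUnitary x * u) := by
  refine ⟨0, 1, expUnitaryCurve x u, zero_le_one,
    .of_contDiffOn_Icc zero_le_one (contDiff_one_expUnitaryCurve x u).contDiffOn,
    fun t _ ↦ (expUnitary (t • x) * u).2, ?_, ?_, ?_⟩
  · simp [expUnitaryCurve]
  · simp [expUnitaryCurve]
  · simp [pathLength, norm_deriv_expUnitaryCurve]

theorem norm_sub_le_geoDist_le_general (u v : unitary A)
    (huv : ContinuousOn arg (spectrum ℂ (v * star u : A))) :
    ‖(u : A) - v‖ ≤ unitaryGeoDist (u : A) v ∧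
      unitaryGeoDist (u : A) v ≤ π / 2 * ‖(u : A) - v‖ := by
  set x := Unitary.argSelfAdjoint (v * star u)
  have hxv : expUnitary x * u = v := by
    rw [expUnitary_argSelfAdjoint_of_continuousOn huv, mul_assoc, Unitary.star_mul_self, mul_one]
  have hmem : ‖x‖ ∈ unitaryCurveLengths (u : A) v := by
    simpa only [← Submonoid.coe_mul, hxv] using norm_mem_unitaryCurveLengths_expUnitary_mul x u
  have hx : ‖x‖ ≤ π / 2 * ‖(u : A) - v‖ := by
    rw [norm_sub_rev, Unitary.norm_sub_eq]
    exact norm_argSelfAdjoint_le_pi_div_two_mul_norm_sub_one _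
  exact ⟨le_csInf ⟨_, hmem⟩ fun _ ↦ norm_sub_le_of_mem_unitaryCurveLengths,
    (csInf_le ⟨_, fun _ ↦ norm_sub_le_of_mem_unitaryCurveLengths⟩ hmem).trans hx⟩

end GeodesicDistance

/-- `‖u − v‖ ≤ d(u,v) ≤ (π/2) ‖u − v‖` for the geodesic distance on
the unitary group, where `‖·‖` is the operator norm. -/
theorem norm_sub_le_geoDist_le (N : ℕ) (hN : 1 ≤ N) (u v : unitary (Op N)) :
    ‖(u : Op N) - (v : Op N)‖ ≤ geoDist N ↑u ↑v ∧
      geoDist N ↑u ↑v ≤ (Real.pi / 2) * ‖(u : Op N) - (v : Op N)‖ := by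
  exact norm_sub_le_geoDist_le_general u v
    ((finite_spectrum_of_isIntegral (Algebra.IsIntegral.isIntegral _)).continuousOn _)
end

section
/- Let v ∈ U(H), let X ∈ H be a unit vector with vX = e^{iθ}X for some θ ∈ (−π, π]. Then for every piecewise C¹ curve γ : [a,b] → U(H) with γ(a) = 1 and γ(b) = v, one has |θ| ≤ L(γ) = ∫_a^b ‖γ'(t)‖ dt. -/
/-!
The orbit `t ↦ γ t X` is a curve on the unit sphere whose speed is at most `‖γ' t‖`, and it runs
from `X` to `e^{iθ} X`, two vectors at angle `|θ|`. A curve on the sphere is at least as long as the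
angle it subtends: by the triangle inequality for angles the right upper derivative of
`t ↦ ∠ (x a) (x t)` is at most that of `z ↦ ∠ (x t) (x z)` at `z = t`, and since the angle between
unit vectors is `2 arcsin (chord / 2)`, this is the speed `‖x' t‖`. A fencing theorem integrates
the estimate, also across times where `x t = ± x a` and the angle is not differentiable.
-/

open Set Filter Topology InnerProductGeometry MeasureTheory

section Sphere

variable {V : Type*} [NormedAddCommGroup V] [InnerProductSpace ℝ V]

lemma angle_eq_two_mul_arcsin_norm_sub_div_two {p q : V} (hp : ‖p‖ = 1) (hq : ‖q‖ = 1) :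
    angle p q = 2 * Real.arcsin (‖p - q‖ / 2) := by
  have hnonneg := angle_nonneg p q
  have hle_pi := angle_le_pi p q
  have sin_nonneg : 0 ≤ Real.sin (angle p q / 2) :=
    Real.sin_nonneg_of_nonneg_of_le_pi (by linarith) (by linarith)
  have sin_sq : Real.sin (angle p q / 2) ^ 2 = (‖p - q‖ / 2) ^ 2 := by
    have inner_eq : inner ℝ p q = Real.cos (angle p q) := by simp [cos_angle, hp, hq]
    rw [Real.sin_sq_eq_half_sub, mul_div_cancel₀ _ two_ne_zero, div_pow, norm_sub_sq_real, hp, hq,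
      inner_eq]
    ring
  have sin_eq : Real.sin (angle p q / 2) = ‖p - q‖ / 2 :=
    (sq_eq_sq₀ sin_nonneg (by positivity)).1 sin_sq
  rw [← sin_eq, Real.arcsin_sin (by linarith) (by linarith)]
  ring

lemma hasDerivWithinAt_norm_sub_Ici {E : Type*} [NormedAddCommGroup E] [NormedSpace ℝ E]
    {x : ℝ → E} {x' : E} {t : ℝ} (hx : HasDerivWithinAt x x' (Ici t) t) :
    HasDerivWithinAt (fun z => ‖x t - x z‖) ‖x'‖ (Ici t) t := by
  rw [← hasDerivWithinAt_Ioi_iff_Ici, hasDerivWithinAt_iff_tendsto_slope' self_notMem_Ioi] at hx ⊢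
  refine hx.norm.congr' ?_
  filter_upwards [self_mem_nhdsWithin] with z (hz : t < z)
  rw [slope_def_module, slope_def_field, norm_smul, norm_inv, Real.norm_of_nonneg (by linarith),
    norm_sub_rev, sub_self, norm_zero, sub_zero, inv_mul_eq_div]

lemma hasDerivWithinAt_angle_Ici {x : ℝ → V} {x' : V} {t : ℝ}
    (hx : HasDerivWithinAt x x' (Ici t) t) (hunit : ∀ᶠ z in 𝓝[≥] t, ‖x z‖ = 1) :
    HasDerivWithinAt (fun z => angle (x t) (x z)) ‖x'‖ (Ici t) t := by
  have ht : ‖x t‖ = 1 := hunit.self_of_nhdsWithin self_mem_Ici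
  have arcsin_deriv : HasDerivAt Real.arcsin 1 (‖x t - x t‖ / 2) := by
    simpa using Real.hasDerivAt_arcsin (x := 0) (by norm_num) (by norm_num)
  have chord_deriv := (hasDerivWithinAt_norm_sub_Ici hx).div_const 2
  have angle_eq : (fun z => angle (x t) (x z)) =ᶠ[𝓝[≥] t]
      fun z => 2 * Real.arcsin (‖x t - x z‖ / 2) :=
    hunit.mono fun z hz => angle_eq_two_mul_arcsin_norm_sub_div_two ht hz
  have angle_deriv := (arcsin_deriv.comp_hasDerivWithinAt t chord_deriv).const_mul 2
  exact (angle_deriv.congr_of_eventuallyEq_of_mem angle_eq self_mem_Ici).congr_deriv (by ring)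

lemma angle_le_of_norm_deriv_right_le_deriv_boundary {x x' : ℝ → V} {B B' : ℝ → ℝ} {a b : ℝ}
    (hx : ContinuousOn x (Icc a b)) (hunit : ∀ t ∈ Icc a b, ‖x t‖ = 1)
    (hx' : ∀ t ∈ Ico a b, HasDerivWithinAt x (x' t) (Ici t) t)
    (ha : 0 ≤ B a) (hB : ContinuousOn B (Icc a b))
    (hB' : ∀ t ∈ Ico a b, HasDerivWithinAt B (B' t) (Ici t) t)
    (bound : ∀ t ∈ Ico a b, ‖x' t‖ ≤ B' t) ⦃t : ℝ⦄ (ht : t ∈ Icc a b) :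
    angle (x a) (x t) ≤ B t := by
  have hne : ∀ t ∈ Icc a b, x t ≠ 0 := fun t ht => norm_ne_zero_iff.1 (by simp [hunit t ht])
  have hxa : x a ≠ 0 := hne a (left_mem_Icc.2 (ht.1.trans ht.2))
  have angle_continuousOn : ContinuousOn (fun t => angle (x a) (x t)) (Icc a b) := fun t ht =>
    (continuousAt_angle (x := (x a, x t)) hxa (hne t ht)).comp_continuousWithinAt
      (f := fun t => (x a, x t)) (continuousWithinAt_const.prodMk (hx t ht))
  refine image_le_of_liminf_slope_right_le_deriv_boundary angle_continuousOn
    (by simpa [angle_self hxa] using ha) hB hB' (fun t ht r hr => ?_) ht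
  have unit_near : ∀ᶠ z in 𝓝[≥] t, ‖x z‖ = 1 :=
    mem_of_superset (Icc_mem_nhdsGE_of_mem ht) hunit
  have local_slope_lt : ∀ᶠ z in 𝓝[>] t, slope (fun z => angle (x t) (x z)) t z < r :=
    (hasDerivWithinAt_angle_Ici (hx' t ht) unit_near).Ioi_of_Ici.limsup_slope_le'
      self_notMem_Ioi ((bound t ht).trans_lt hr)
  refine Eventually.frequently ?_
  filter_upwards [local_slope_lt, self_mem_nhdsWithin] with z hz (htz : t < z)
  refine lt_of_le_of_lt ?_ hz
  rw [slope_def_field, slope_def_field, angle_self (hne t (Ico_subset_Icc_self ht)), sub_zero]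
  exact div_le_div_of_nonneg_right (sub_le_iff_le_add'.2 (angle_le_angle_add_angle _ _ _))
    (sub_nonneg.2 htz.le)

end Sphere

section PiecewiseC1

variable {E V : Type*} [NormedAddCommGroup E] [NormedSpace ℝ E] {γ : ℝ → E} {a b : ℝ}

lemma deriv_eqOn_derivWithin_Icc : EqOn (deriv γ) (derivWithin γ (Icc a b)) (Ioo a b) :=
  fun _ ht => (derivWithin_of_mem_nhds (Icc_mem_nhds ht.1 ht.2)).symm

lemma pathLength_eq_integral_norm_derivWithin (hab : a ≤ b) :
    pathLength γ a b = ∫ t in a..b, ‖derivWithin γ (Icc a b) t‖ := by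
  refine intervalIntegral.integral_congr_uIoo ?_
  rw [uIoo_of_le hab]
  exact deriv_eqOn_derivWithin_Icc.comp_left

lemma continuousOn_norm_derivWithin_Icc (hab : a < b) (hγ : ContDiffOn ℝ 1 γ (Icc a b)) :
    ContinuousOn (fun t => ‖derivWithin γ (Icc a b) t‖) (Icc a b) :=
  (hγ.continuousOn_derivWithin (uniqueDiffOn_Icc hab) le_rfl).norm

lemma intervalIntegrable_norm_deriv_of_contDiffOn_Icc (hab : a ≤ b)
    (hγ : ContDiffOn ℝ 1 γ (Icc a b)) :
    IntervalIntegrable (fun t => ‖deriv γ t‖) volume a b := by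
  rcases hab.eq_or_lt with rfl | hlt
  · exact .refl
  refine ((continuousOn_norm_derivWithin_Icc hlt hγ).intervalIntegrable_of_Icc hab).congr_uIoo ?_
  rw [uIoo_of_le hab]
  exact (deriv_eqOn_derivWithin_Icc.comp_left (g := norm)).symm

lemma hasDerivWithinAt_integral_Ici [CompleteSpace E] {f : ℝ → E} (hf : ContinuousOn f (Icc a b))
    {t : ℝ} (ht : t ∈ Ico a b) :
    HasDerivWithinAt (fun u => ∫ z in a..u, f z) (f t) (Ici t) t := by
  have ht' := Ico_subset_Icc_self ht
  have : Fact (t ∈ Icc a b) := ⟨ht'⟩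
  have integrable : IntervalIntegrable f volume a t :=
    (hf.mono (Icc_subset_Icc_right ht'.2)).intervalIntegrable_of_Icc ht'.1
  have deriv_Icc : HasDerivWithinAt (fun u => ∫ z in a..u, f z) (f t) (Icc a b) t :=
    intervalIntegral.integral_hasDerivWithinAt_right integrable
      (hf.stronglyMeasurableAtFilter_nhdsWithin measurableSet_Icc t) (hf t ht')
  exact deriv_Icc.mono_of_mem_nhdsWithin (Icc_mem_nhdsGE_of_mem ht)

lemma PiecewiseC1On.induction_on_pieces (hγ : PiecewiseC1On γ a b) {P : ℝ → ℝ → Prop}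
    (piece : ∀ s t, s ≤ t → Icc s t ⊆ Icc a b → ContDiffOn ℝ 1 γ (Icc s t) → P s t)
    (trans : ∀ r s t, P r s → P s t → P r t) : P a b := by
  obtain ⟨n, τ, rfl, rfl, hτ, hC1⟩ := hγ
  have τ_mono : MonotoneOn τ (Iic n) :=
    monotoneOn_of_le_add_one ordConnected_Iic fun i _ _ hi => hτ i (Nat.lt_of_succ_le hi)
  suffices initial : ∀ k ≤ n, P (τ 0) (τ k) from initial n le_rfl
  intro k hk
  induction k with
  | zero =>
    have hC1_point : ContDiffOn ℝ 1 γ (Icc (τ 0) (τ 0)) :=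
      (contDiffOn_const (c := γ (τ 0))).congr fun t ht => by
        rw [Icc_self] at ht
        rw [ht]
    exact piece _ _ le_rfl
      (Icc_subset_Icc_right (τ_mono n.zero_le self_mem_Iic n.zero_le)) hC1_point
  | succ k ih =>
    have hk' : k ≤ n := Nat.le_of_succ_le hk
    exact trans _ _ _ (ih hk') (piece _ _ (hτ k hk)
      (Icc_subset_Icc (τ_mono n.zero_le hk' k.zero_le) (τ_mono hk self_mem_Iic hk)) (hC1 k hk))

lemma PiecewiseC1On.le (hγ : PiecewiseC1On γ a b) : a ≤ b :=
  hγ.induction_on_pieces (fun _ _ hst _ _ => hst) fun _ _ _ => le_trans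

lemma PiecewiseC1On.pathLength_nonneg (hγ : PiecewiseC1On γ a b) : 0 ≤ pathLength γ a b :=
  intervalIntegral.integral_nonneg hγ.le fun _ _ => norm_nonneg _

variable [NormedAddCommGroup V] [InnerProductSpace ℝ V]

lemma angle_map_le_opNorm_mul_pathLength_of_contDiffOn_Icc (L : E →L[ℝ] V) (hab : a ≤ b)
    (hγ : ContDiffOn ℝ 1 γ (Icc a b)) (hunit : ∀ t ∈ Icc a b, ‖L (γ t)‖ = 1) :
    angle (L (γ a)) (L (γ b)) ≤ ‖L‖ * pathLength γ a b := by
  rcases hab.eq_or_lt with rfl | hlt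
  · have hne : L (γ a) ≠ 0 := norm_ne_zero_iff.1 (by simp [hunit a])
    simp [angle_self hne, pathLength]
  have speed_continuousOn := continuousOn_norm_derivWithin_Icc hlt hγ
  have length_continuousOn := intervalIntegral.continuousOn_primitive_interval'
    (speed_continuousOn.intervalIntegrable_of_Icc (μ := volume) hab) left_mem_uIcc
  rw [uIcc_of_le hab] at length_continuousOn
  rw [pathLength_eq_integral_norm_derivWithin hab]
  refine angle_le_of_norm_deriv_right_le_deriv_boundary
    (x := fun t => L (γ t)) (x' := fun t => L (derivWithin γ (Icc a b) t))
    (B := fun t => ‖L‖ * ∫ u in a..t, ‖derivWithin γ (Icc a b) u‖)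
    (B' := fun t => ‖L‖ * ‖derivWithin γ (Icc a b) t‖)
    (L.continuous.comp_continuousOn hγ.continuousOn) hunit (fun t ht => ?_) (by simp)
    (continuousOn_const.mul length_continuousOn)
    (fun t ht => (hasDerivWithinAt_integral_Ici speed_continuousOn ht).const_mul _)
    (fun t _ => L.le_opNorm _) (right_mem_Icc.2 hab)
  have hγt := (hγ.differentiableOn one_ne_zero t (Ico_subset_Icc_self ht)).hasDerivWithinAt
  exact L.hasFDerivAt.comp_hasDerivWithinAt t
    (hγt.mono_of_mem_nhdsWithin (Icc_mem_nhdsGE_of_mem ht))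

lemma PiecewiseC1On.angle_map_le_opNorm_mul_pathLength (hγ : PiecewiseC1On γ a b) (L : E →L[ℝ] V)
    (hunit : ∀ t ∈ Icc a b, ‖L (γ t)‖ = 1) :
    angle (L (γ a)) (L (γ b)) ≤ ‖L‖ * pathLength γ a b := by
  refine (hγ.induction_on_pieces
    (P := fun s t => IntervalIntegrable (fun u => ‖deriv γ u‖) volume s t ∧
      angle (L (γ s)) (L (γ t)) ≤ ‖L‖ * pathLength γ s t)
    (fun s t hst hsub hC1 => ⟨intervalIntegrable_norm_deriv_of_contDiffOn_Icc hst hC1,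
      angle_map_le_opNorm_mul_pathLength_of_contDiffOn_Icc L hst hC1
        fun u hu => hunit u (hsub hu)⟩) ?_).2
  rintro r s t ⟨hrs, angle_rs⟩ ⟨hst, angle_st⟩
  refine ⟨hrs.trans hst, ?_⟩
  calc angle (L (γ r)) (L (γ t))
      ≤ angle (L (γ r)) (L (γ s)) + angle (L (γ s)) (L (γ t)) := angle_le_angle_add_angle _ _ _
    _ ≤ ‖L‖ * pathLength γ r s + ‖L‖ * pathLength γ s t := add_le_add angle_rs angle_st
    _ = ‖L‖ * pathLength γ r t := by
      simp only [pathLength]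
      rw [← mul_add, intervalIntegral.integral_add_adjacent_intervals hrs hst]

end PiecewiseC1

section ComplexInnerProductSpace

variable {H : Type*} [NormedAddCommGroup H] [InnerProductSpace ℂ H]

attribute [local instance] InnerProductSpace.complexToReal

lemma angle_smul_right_eq_abs_arg {X : H} (hX : X ≠ 0) {z : ℂ} (hz : z ≠ 0) :
    angle X (z • X) = |z.arg| := by
  have hXnorm : ‖X‖ ≠ 0 := norm_ne_zero_iff.2 hX
  have cos_eq : inner ℝ X (z • X) / (‖X‖ * ‖z • X‖) = Real.cos |z.arg| := by
    have inner_eq : inner ℝ X (z • X) = z.re * ‖X‖ ^ 2 := by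
      change (inner ℂ X (z • X)).re = _
      rw [inner_smul_right, inner_self_eq_norm_sq_to_K]
      norm_cast
      exact Complex.re_mul_ofReal _ _
    rw [inner_eq, norm_smul, Real.cos_abs, Complex.cos_arg hz]
    field_simp
  rw [angle, cos_eq, Real.arccos_cos (abs_nonneg _) (Complex.abs_arg_le_pi z)]

lemma PiecewiseC1On.angle_apply_le_pathLength {F : Type*} [NormedAddCommGroup F] [NormedSpace ℂ F]
    {γ : ℝ → F →L[ℂ] H} {a b : ℝ} {X : F} (hγ : PiecewiseC1On γ a b) (hX : ‖X‖ ≤ 1)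
    (hunit : ∀ t ∈ Icc a b, ‖γ t X‖ = 1) : angle (γ a X) (γ b X) ≤ pathLength γ a b := by
  let evalX : (F →L[ℂ] H) →L[ℝ] H := (ContinuousLinearMap.apply ℂ H X).restrictScalars ℝ
  have evalX_norm_le : ‖evalX‖ ≤ 1 :=
    evalX.opNorm_le_bound zero_le_one fun A => by
      rw [one_mul]
      exact A.unit_le_opNorm X hX
  calc angle (γ a X) (γ b X)
      ≤ ‖evalX‖ * pathLength γ a b := hγ.angle_map_le_opNorm_mul_pathLength evalX hunit
    _ ≤ pathLength γ a b := mul_le_of_le_one_left hγ.pathLength_nonneg evalX_norm_le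

theorem abs_arg_eigenvalue_le_length_general {γ : ℝ → H →L[ℂ] H} {a b θ : ℝ} {X : H}
    (hγ : PiecewiseC1On γ a b) (hnorm : ∀ t ∈ Icc a b, ‖γ t X‖ = ‖X‖) (hX : ‖X‖ = 1)
    (ha : γ a X = X) (hb : γ b X = Complex.exp (θ * Complex.I) • X)
    (hθ : θ ∈ Ioc (-Real.pi) Real.pi) :
    |θ| ≤ pathLength γ a b := by
  have hX₀ : X ≠ 0 := norm_ne_zero_iff.1 (by simp [hX])
  have arg_eq : (Complex.exp (θ * Complex.I)).arg = θ := by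
    rw [Complex.exp_mul_I, Complex.arg_cos_add_sin_mul_I hθ]
  calc |θ| = angle X (Complex.exp (θ * Complex.I) • X) := by
        rw [angle_smul_right_eq_abs_arg hX₀ (Complex.exp_ne_zero _), arg_eq]
    _ = angle (γ a X) (γ b X) := by rw [ha, hb]
    _ ≤ pathLength γ a b :=
        hγ.angle_apply_le_pathLength hX.le fun t ht => (hnorm t ht).trans hX

end ComplexInnerProductSpace

/-- if `v` is unitary, `X` a unit vector with `v X = e^{iθ} X`,
`θ ∈ (-π, π]`, then every piecewise C¹ curve in `U(H)` from `1` to `v` has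
length at least `|θ|`. -/
theorem abs_arg_eigenvalue_le_length (N : ℕ) (hN : 1 ≤ N) (v : unitary (Op N))
    (X : Hsp N) (hX : ‖X‖ = 1) (θ : ℝ) (hθ : θ ∈ Set.Ioc (-Real.pi) Real.pi)
    (hvX : (v : Op N) X = Complex.exp (θ * Complex.I) • X)
    (a b : ℝ) (hab : a ≤ b) (γ : ℝ → Op N) (hγ : PiecewiseC1On γ a b)
    (hunit : ∀ t ∈ Set.Icc a b, γ t ∈ unitary (Op N))
    (ha : γ a = 1) (hb : γ b = (v : Op N)) :
    |θ| ≤ pathLength γ a b := by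
  exact abs_arg_eigenvalue_le_length_general hγ
    (fun t ht => ContinuousLinearMap.norm_map_of_mem_unitary (hunit t ht) X) hX
    (by simp [ha]) (by rw [hb, hvX]) hθ
end

section
/- For any (u,φ), (v,ψ) ∈ Ũ(H) and any θ ∈ R, one has d̃((u,φ), (v,ψ)) ≤ max_j |θ_j|; consequently d̃((u,φ), (v,ψ)) ≤ m. (Indeed, if H is the Hermitian endomorphism with H X_j = θ_j X_j in an orthonormal eigenbasis (X_j) of vu^{-1}, the path t ↦ (e^{itH}u, φ + t·tr H), t ∈ [0,1], joins (u,φ) to (v,ψ) and has length ‖H‖ = max_j |θ_j|.) -/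
/-!
By the spectral theorem, `v * u⁻¹` is diagonal in an orthonormal basis `b`, which can be ordered so
that the eigenvalue at `b j` is `exp (θ j * I)`. Let `a` be the skew-adjoint operator with
`a (b j) = (θ j * I) • b j`. Then `t ↦ (exp (t • a) * u, φ + t * ∑ j, θ j)`, for `t ∈ [0, 1]`, stays
in the universal cover because `det (exp (t • a)) = exp (t * ∑ j, θ j * I)`, it joins `(u, φ)` to
`(v, ψ)`, and it has constant speed `‖a‖ = max |θ j|`, since multiplication by unitaries preserves
the norm.
-/

open Complex (I)
open InnerProductSpace Module.End
open scoped ComplexStarModule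

section Multiset

variable {ι κ α : Type*} [Fintype ι] [Fintype κ]

theorem exists_equiv_comp_eq_of_map_univ_val_eq {f : ι → α} {g : κ → α}
    (h : Finset.univ.val.map f = Finset.univ.val.map g) : ∃ σ : ι ≃ κ, g ∘ σ = f := by
  classical
  have card_fiber_eq (c : α) : Fintype.card {i // f i = c} = Fintype.card {k // g k = c} := by
    simpa only [Multiset.count_map, Fintype.card_subtype, Finset.card_def, Finset.filter_val,
      eq_comm] using congrArg (Multiset.count c) h
  let fiberEquiv (c : α) := Fintype.equivOfCardEq (card_fiber_eq c)
  exact ⟨Equiv.ofFiberEquiv fiberEquiv, funext (Equiv.ofFiberEquiv_map fiberEquiv)⟩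

end Multiset

theorem isStarNormal_sub_algebraMap {R A : Type*} [CommRing R] [StarRing R] [Ring A] [StarRing A]
    [Algebra R A] [StarModule R A] (a : A) [ha : IsStarNormal a] (r : R) :
    IsStarNormal (a - algebraMap R A r) := by
  refine ⟨?_⟩
  rw [star_sub, ← algebraMap_star_comm]
  exact (ha.star_comm_self.sub_left (Algebra.commutes _ _)).sub_right
    (Algebra.commutes _ _).symm

section SpectralTheorem

section RCLike

variable {𝕜 E : Type*} [RCLike 𝕜] [NormedAddCommGroup E] [InnerProductSpace 𝕜 E] [CompleteSpace E]

theorem adjoint_apply_eq_star_smul_of_mem_eigenspace {T : E →L[𝕜] E} [IsStarNormal T] {μ : 𝕜}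
    {x : E} (hx : x ∈ eigenspace (T : E →ₗ[𝕜] E) μ) : T.adjoint x = star μ • x := by
  have hTμ : (T - algebraMap 𝕜 (E →L[𝕜] E) μ) x = 0 := by
    simpa [sub_eq_zero, Algebra.algebraMap_eq_smul_one] using mem_eigenspace_iff.mp hx
  have hadjoint := (ContinuousLinearMap.IsStarNormal.adjoint_apply_eq_zero_iff
    (isStarNormal_sub_algebraMap T μ) x).mpr hTμ
  rw [← ContinuousLinearMap.star_eq_adjoint, star_sub, ← algebraMap_star_comm] at hadjoint
  simpa [sub_eq_zero, Algebra.algebraMap_eq_smul_one, ContinuousLinearMap.star_eq_adjoint]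
    using hadjoint

theorem orthogonalFamily_eigenspaces_of_isStarNormal (T : E →L[𝕜] E) [IsStarNormal T] :
    OrthogonalFamily 𝕜 (fun μ => eigenspace (T : E →ₗ[𝕜] E) μ)
      fun μ => (eigenspace (T : E →ₗ[𝕜] E) μ).subtypeₗᵢ := by
  rintro μ ν hμν ⟨x, hx⟩ ⟨y, hy⟩
  have heq : μ * inner 𝕜 x y = ν * inner 𝕜 x y := by
    calc μ * inner 𝕜 x y = inner 𝕜 (T.adjoint x) y := by
          rw [adjoint_apply_eq_star_smul_of_mem_eigenspace hx, inner_smul_left, RCLike.star_def,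
            RCLike.conj_conj]
      _ = inner 𝕜 x (T y) := T.adjoint_inner_left y x
      _ = ν * inner 𝕜 x y := by
          rw [← inner_smul_right, ← mem_eigenspace_iff.mp hy, ContinuousLinearMap.coe_coe]
  exact (mul_eq_mul_right_iff.mp heq).resolve_left hμν

end RCLike

variable {E : Type*} [NormedAddCommGroup E] [InnerProductSpace ℂ E] [CompleteSpace E]

theorem eigenspace_realPart_inf_eigenspace_imaginaryPart_le (T : E →L[ℂ] E) (α β : ℂ) :
    eigenspace (ℜ T : E →L[ℂ] E).toLinearMap α ⊓ eigenspace (ℑ T : E →L[ℂ] E).toLinearMap β ≤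
      eigenspace (T : E →ₗ[ℂ] E) (α + I * β) := by
  rintro x ⟨hα, hβ⟩
  have hre : (ℜ T : E →L[ℂ] E) x = α • x := mem_eigenspace_iff.mp hα
  have him : (ℑ T : E →L[ℂ] E) x = β • x := mem_eigenspace_iff.mp hβ
  rw [mem_eigenspace_iff]
  calc T x = (ℜ T : E →L[ℂ] E) x + I • (ℑ T : E →L[ℂ] E) x := by
        conv_lhs => rw [← realPart_add_I_smul_imaginaryPart T]
        rfl
    _ = (α + I * β) • x := by rw [hre, him, smul_smul, add_smul]

variable [FiniteDimensional ℂ E]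

theorem iSup_eigenspace_eq_top_of_isStarNormal (T : E →L[ℂ] E) [IsStarNormal T] :
    ⨆ μ, eigenspace (T : E →ₗ[ℂ] E) μ = ⊤ := by
  have hcomm : Commute (ℜ T : E →L[ℂ] E).toLinearMap (ℑ T : E →L[ℂ] E).toLinearMap :=
    (Commute.realPart_imaginaryPart T).map ContinuousLinearMap.toLinearMapRingHom
  rw [eq_top_iff, ← (ℜ T).2.isSymmetric.iSup_iSup_eigenspace_inf_eigenspace_eq_top_of_commute
    (ℑ T).2.isSymmetric hcomm]
  exact iSup₂_le fun α β =>
    (eigenspace_realPart_inf_eigenspace_imaginaryPart_le T α β).trans (le_iSup _ (α + I * β))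

theorem exists_orthonormalBasis_apply_eq_smul_of_isStarNormal (T : E →L[ℂ] E) [IsStarNormal T]
    {n : ℕ} (hn : Module.finrank ℂ E = n) :
    ∃ (b : OrthonormalBasis (Fin n) ℂ E) (μ : Fin n → ℂ), ∀ i, T (b i) = μ i • b i := by
  classical
  have horth := (orthogonalFamily_eigenspaces_of_isStarNormal T).comp
    (γ := Eigenvalues (T : E →ₗ[ℂ] E)) Subtype.coe_injective
  have hinternal : DirectSum.IsInternal
      fun μ : Eigenvalues (T : E →ₗ[ℂ] E) => eigenspace (T : E →ₗ[ℂ] E) μ.val := by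
    refine horth.isInternal_iff.mpr (Submodule.orthogonal_eq_bot_iff.mpr ?_)
    exact (iSup_ne_bot_subtype _).trans (iSup_eigenspace_eq_top_of_isStarNormal T)
  exact ⟨hinternal.subordinateOrthonormalBasis hn horth,
    fun i => (hinternal.subordinateOrthonormalBasisIndex hn i horth).val,
    fun i => mem_eigenspace_iff.mp
      (hinternal.subordinateOrthonormalBasis_subordinate hn i horth)⟩

end SpectralTheorem

section DiagonalOperator

variable {ι 𝕜 E : Type*} [Fintype ι] [RCLike 𝕜] [NormedAddCommGroup E] [InnerProductSpace 𝕜 E]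

theorem ext_orthonormalBasis (b : OrthonormalBasis ι 𝕜 E) {S T : E →L[𝕜] E}
    (h : ∀ i, S (b i) = T (b i)) : S = T :=
  ContinuousLinearMap.coe_injective (b.toBasis.ext (by simpa using h))

variable (b : OrthonormalBasis ι 𝕜 E)

theorem sum_smul_rankOne_apply_self (f : ι → 𝕜) (i : ι) :
    (∑ j, f j • rankOne 𝕜 (b j) (b j)) (b i) = f i • b i := by
  classical
  simp [b.inner_eq_ite]

variable [CompleteSpace E]

/-- The operator that is diagonal in the orthonormal basis `b`, as a function of its diagonal.
It is bundled as a star homomorphism on `ι → 𝕜`: over `ℂ`, such a map between C⋆-algebras is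
contractive for the supremum norm and commutes with exponentials. -/
noncomputable def diagonalOperator : (ι → 𝕜) →⋆ₐ[𝕜] (E →L[𝕜] E) where
  toFun f := ∑ i, f i • rankOne 𝕜 (b i) (b i)
  map_one' := by simpa using! b.sum_rankOne_eq_id
  map_mul' f g := ext_orthonormalBasis b fun i => by
    simp only [mul_apply_eq_comp, sum_smul_rankOne_apply_self, map_smul, smul_smul,
      Pi.mul_apply, mul_comm]
  map_zero' := by simp
  map_add' f g := by simp [add_smul, Finset.sum_add_distrib]
  commutes' r := ext_orthonormalBasis b fun i => by
    rw [sum_smul_rankOne_apply_self]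
    simp [Algebra.algebraMap_eq_smul_one]
  map_star' f := by
    simp [star_sum, ContinuousLinearMap.star_eq_adjoint]

theorem diagonalOperator_apply_self (f : ι → 𝕜) (i : ι) :
    diagonalOperator b f (b i) = f i • b i :=
  sum_smul_rankOne_apply_self b f i

theorem eq_diagonalOperator {T : E →L[𝕜] E} {f : ι → 𝕜} (h : ∀ i, T (b i) = f i • b i) :
    T = diagonalOperator b f :=
  ext_orthonormalBasis b fun i => (h i).trans (diagonalOperator_apply_self b f i).symm

theorem toMatrix_diagonalOperator [DecidableEq ι] (f : ι → 𝕜) :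
    LinearMap.toMatrix b.toBasis b.toBasis (diagonalOperator b f : E →ₗ[𝕜] E) =
      Matrix.diagonal f := by
  ext i j
  rcases eq_or_ne i j with rfl | hij
  · simp [LinearMap.toMatrix_apply, diagonalOperator_apply_self]
  · simp [LinearMap.toMatrix_apply, diagonalOperator_apply_self, hij]

theorem det_diagonalOperator (f : ι → 𝕜) :
    LinearMap.det (diagonalOperator b f : E →ₗ[𝕜] E) = ∏ i, f i := by
  classical
  rw [← LinearMap.det_toMatrix b.toBasis, toMatrix_diagonalOperator, Matrix.det_diagonal]

theorem roots_charpoly_diagonalOperator [FiniteDimensional 𝕜 E] (f : ι → 𝕜) :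
    (diagonalOperator b f : E →ₗ[𝕜] E).charpoly.roots = Finset.univ.val.map f := by
  classical
  rw [← LinearMap.charpoly_toMatrix _ b.toBasis, toMatrix_diagonalOperator,
    Matrix.charpoly_diagonal, ← Polynomial.roots_multiset_prod_X_sub_C (Finset.univ.val.map f),
    Multiset.map_map]
  rfl

end DiagonalOperator

section ComplexDiagonal

variable {ι E : Type*} [Fintype ι] [NormedAddCommGroup E] [InnerProductSpace ℂ E]
  [CompleteSpace E] (b : OrthonormalBasis ι ℂ E)

theorem exp_diagonalOperator (f : ι → ℂ) :
    NormedSpace.exp (diagonalOperator b f) = diagonalOperator b fun i => Complex.exp (f i) := by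
  have hcont : Continuous (diagonalOperator b) :=
    AddMonoidHomClass.continuous_of_bound _ 1 fun f => by
      simpa using NonUnitalStarAlgHom.norm_apply_le (diagonalOperator b) f
  let +nondep : NormedAlgebra ℚ (E →L[ℂ] E) := .restrictScalars ℚ ℂ _
  rw [← NormedSpace.map_exp (diagonalOperator b) hcont]
  congr 1
  ext i
  rw [Pi.coe_exp, Complex.exp_eq_exp_ℂ]

theorem det_exp_diagonalOperator (f : ι → ℂ) :
    LinearMap.det (NormedSpace.exp (diagonalOperator b f) : E →L[ℂ] E).toLinearMap =
      Complex.exp (∑ i, f i) := by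
  rw [exp_diagonalOperator, det_diagonalOperator, Complex.exp_sum]

theorem diagonalOperator_ofReal_mul_I_mem_skewAdjoint (θ : ι → ℝ) :
    diagonalOperator b (fun i => θ i * I) ∈ skewAdjoint (E →L[ℂ] E) := by
  rw [skewAdjoint.mem_iff, ← map_star, ← map_neg]
  congr 1
  ext i
  simp

theorem norm_diagonalOperator_ofReal_mul_I_le (θ : ι → ℝ) :
    ‖diagonalOperator b (fun i => θ i * I)‖ ≤ ⨆ i, |θ i| := by
  refine (NonUnitalStarAlgHom.norm_apply_le (diagonalOperator b) _).trans ?_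
  refine (pi_norm_le_iff_of_nonneg (Real.iSup_nonneg fun i => abs_nonneg (θ i))).mpr fun i => ?_
  simpa using le_ciSup (Set.finite_range fun i => |θ i|).bddAbove i

theorem exists_orthonormalBasis_eq_diagonalOperator_of_roots_charpoly [FiniteDimensional ℂ E]
    {T : E →L[ℂ] E} [IsStarNormal T] {f : ι → ℂ}
    (hf : Finset.univ.val.map f = (T : E →ₗ[ℂ] E).charpoly.roots) :
    ∃ b : OrthonormalBasis ι ℂ E, T = diagonalOperator b f := by
  obtain ⟨b, μ, hb⟩ := exists_orthonormalBasis_apply_eq_smul_of_isStarNormal T rfl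
  rw [eq_diagonalOperator b hb, roots_charpoly_diagonalOperator] at hf
  obtain ⟨σ, rfl⟩ := exists_equiv_comp_eq_of_map_univ_val_eq hf
  exact ⟨b.reindex σ.symm, eq_diagonalOperator _ fun i => by simpa using hb (σ i)⟩

end ComplexDiagonal

section Paths

theorem piecewiseC1On_of_contDiff {E : Type*} [NormedAddCommGroup E] [NormedSpace ℝ E]
    {γ : ℝ → E} (hγ : ContDiff ℝ 1 γ) {a b : ℝ} (hab : a ≤ b) : PiecewiseC1On γ a b :=
  ⟨1, fun i => if i = 0 then a else b, by simp, by simp, by simpa, fun _ _ => hγ.contDiffOn⟩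

theorem pathLength_nonneg {E : Type*} [NormedAddCommGroup E] [NormedSpace ℝ E]
    (γ : ℝ → E) {a b : ℝ} (hab : a ≤ b) : 0 ≤ pathLength γ a b :=
  intervalIntegral.integral_nonneg hab fun _ _ => norm_nonneg _

theorem contDiff_exp_smul {𝕜 A : Type*} [RCLike 𝕜] [NormedRing A] [NormedAlgebra 𝕜 A]
    [CompleteSpace A] (a : A) {n : WithTop ℕ∞} :
    ContDiff 𝕜 n fun t : 𝕜 => NormedSpace.exp (t • a) := by
  have contDiff_exp : ContDiff 𝕜 n (NormedSpace.exp : A → A) :=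
    AnalyticOnNhd.contDiff fun x _ => NormedSpace.exp_analytic x
  exact contDiff_exp.comp (contDiff_id.smul contDiff_const)

theorem pathLength_exp_smul_mul {A : Type*} [CStarAlgebra A] {a u : A}
    (ha : a ∈ skewAdjoint A) (hu : u ∈ unitary A) (s t : ℝ) :
    pathLength (fun r : ℝ => NormedSpace.exp (r • a) * u) s t = (t - s) * ‖a‖ := by
  let +nondep : NormedAlgebra ℚ A := .restrictScalars ℚ ℂ A
  have norm_deriv (r : ℝ) : ‖deriv (fun r : ℝ => NormedSpace.exp (r • a) * u) r‖ = ‖a‖ := by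
    have hexp : NormedSpace.exp (r • a) ∈ unitary A :=
      NormedSpace.exp_mem_unitary_of_mem_skewAdjoint (skewAdjoint.smul_mem r ha)
    rw [((hasDerivAt_exp_smul_const a r).mul_const u).deriv, CStarRing.norm_mul_mem_unitary _ hu,
      CStarRing.norm_mem_unitary_mul _ hexp]
  simp [pathLength, norm_deriv]

end Paths

section UniversalCover

variable {N : ℕ}

theorem ucoverDist_le_pathLength {a b : ℝ} {γ : ℝ → Op N} {f : ℝ → ℝ} (hab : a ≤ b)
    (hC1 : PiecewiseC1On (fun t => (γ t, f t)) a b)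
    (hmem : ∀ t ∈ Set.Icc a b, InUCover N (γ t) (f t)) :
    ucoverDist N (γ a) (f a) (γ b) (f b) ≤ pathLength γ a b := by
  refine csInf_le ⟨0, ?_⟩ ⟨a, b, γ, f, hab, hC1, hmem, rfl, rfl, rfl, rfl, rfl⟩
  rintro _ ⟨_, _, γ', _, hle, -, -, -, -, -, -, rfl⟩
  exact pathLength_nonneg γ' hle

theorem inUCover_exp_diagonalOperator_mul {ι : Type*} [Fintype ι]
    (b : OrthonormalBasis ι ℂ (Hsp N)) (θ : ι → ℝ) {u : Op N} {φ : ℝ} (hu : InUCover N u φ) :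
    InUCover N (NormedSpace.exp (diagonalOperator b fun i => θ i * I) * u) (φ + ∑ i, θ i) := by
  let +nondep : NormedAlgebra ℚ (Op N) := .restrictScalars ℚ ℂ _
  refine ⟨mul_mem (NormedSpace.exp_mem_unitary_of_mem_skewAdjoint
    (diagonalOperator_ofReal_mul_I_mem_skewAdjoint b θ)) hu.1, ?_⟩
  calc LinearMap.det (NormedSpace.exp (diagonalOperator b fun i => θ i * I) * u).toLinearMap
      = LinearMap.det (NormedSpace.exp (diagonalOperator b fun i => θ i * I)).toLinearMap *
          LinearMap.det (u : Hsp N →ₗ[ℂ] Hsp N) := LinearMap.det_comp _ _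
    _ = Complex.exp (∑ i, θ i * I) * Complex.exp (φ * I) := by
        rw [det_exp_diagonalOperator, hu.2]
    _ = Complex.exp ((φ + ∑ i, θ i : ℝ) * I) := by
        rw [← Complex.exp_add, ← Finset.sum_mul]
        push_cast
        ring_nf

theorem ucoverDist_exp_diagonalOperator_mul_le {ι : Type*} [Fintype ι]
    (b : OrthonormalBasis ι ℂ (Hsp N)) (θ : ι → ℝ) {u : Op N} {φ : ℝ} (hu : InUCover N u φ) :
    ucoverDist N u φ (NormedSpace.exp (diagonalOperator b fun i => θ i * I) * u)
      (φ + ∑ i, θ i) ≤ ⨆ i, |θ i| := by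
  set a := diagonalOperator b fun i => θ i * I with ha
  let γ (t : ℝ) : Op N := NormedSpace.exp (t • a) * u
  let f (t : ℝ) : ℝ := φ + t * ∑ i, θ i
  have hC1 : ContDiff ℝ 1 fun t => (γ t, f t) :=
    ((contDiff_exp_smul a).mul contDiff_const).prodMk
      (contDiff_const.add (contDiff_id.mul contDiff_const))
  have hmem (t : ℝ) : InUCover N (γ t) (f t) := by
    have hsmul : t • a = diagonalOperator b fun i => (t * θ i : ℝ) * I := by
      rw [ha, ← Complex.coe_smul, ← map_smul]
      congr 1
      ext i
      simp [mul_assoc]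
    simpa only [γ, f, hsmul, Finset.mul_sum] using
      inUCover_exp_diagonalOperator_mul b (fun i => t * θ i) hu
  calc ucoverDist N u φ (NormedSpace.exp a * u) (φ + ∑ i, θ i)
      = ucoverDist N (γ 0) (f 0) (γ 1) (f 1) := by simp [γ, f]
    _ ≤ pathLength γ 0 1 := ucoverDist_le_pathLength zero_le_one
        (piecewiseC1On_of_contDiff hC1 zero_le_one) fun t _ => hmem t
    _ = ‖a‖ := by
        simpa using pathLength_exp_smul_mul
          (diagonalOperator_ofReal_mul_I_mem_skewAdjoint b θ) hu.1 0 1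
    _ ≤ ⨆ i, |θ i| := norm_diagonalOperator_ofReal_mul_I_le b θ

theorem ucoverDist_le_iSup_abs_of_inRSet {u v : unitary (Op N)} {φ ψ : ℝ}
    (hu : InUCover N u φ) {θ : Fin N → ℝ} (hθ : InRSet N ↑(v * u⁻¹) (ψ - φ) θ) :
    ucoverDist N u φ v ψ ≤ ⨆ j, |θ j| := by
  obtain ⟨heigenvalues, hsum⟩ := hθ
  obtain ⟨b, hb⟩ := exists_orthonormalBasis_eq_diagonalOperator_of_roots_charpoly heigenvalues
  have hv : NormedSpace.exp (diagonalOperator b fun j => θ j * I) * (u : Op N) = v := by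
    rw [exp_diagonalOperator, ← hb, ← Submonoid.coe_mul, inv_mul_cancel_right]
  have hψ : φ + ∑ j, θ j = ψ := by rw [hsum, add_sub_cancel]
  simpa only [hv, hψ] using ucoverDist_exp_diagonalOperator_mul_le b θ hu

end UniversalCover

/-- for `(u,φ), (v,ψ) ∈ Ũ(H)` and any `θ ∈ R`,
`d̃((u,φ),(v,ψ)) ≤ max_j |θ_j|`; consequently `d̃((u,φ),(v,ψ)) ≤ m`. -/
theorem ucoverDist_le_max_theta (N : ℕ) (hN : 1 ≤ N) (u v : unitary (Op N))
    (φ ψ : ℝ) (hu : InUCover N ↑u φ) (hv : InUCover N ↑v ψ)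
    (θ : Fin N → ℝ) (hθ : InRSet N ↑(v * u⁻¹) (ψ - φ) θ) :
    (ucoverDist N ↑u φ ↑v ψ ≤ ⨆ j, |θ j|) ∧
      ucoverDist N ↑u φ ↑v ψ ≤ mval N ↑(v * u⁻¹) (ψ - φ) := by
  refine ⟨ucoverDist_le_iSup_abs_of_inRSet hu hθ, le_csInf ⟨_, θ, hθ, rfl⟩ ?_⟩
  rintro _ ⟨θ', hθ', rfl⟩
  exact ucoverDist_le_iSup_abs_of_inRSet hu hθ'
end
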